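/- Let α > 0 and let β be a populated multi-index with |β| < 2. Then β(n) = 0 for all n ∈ ℕ² \ {(0,0)} if and only if Σ_{n≠(0,0)} n₁·β(n) is even. -/

import Mathlib

open Finsupp

noncomputable section

/-- The index set `I`: symbols `z_k` for `k : ℕ` (left summand) and `z_n` for
`n ∈ ℕ² \ {(0,0)}` (right summand). -/
abbrev RSIdx : Type := ℕ ⊕ {n : ℕ × ℕ // n ≠ (0, 0)}

/-- Multi-indices: finitely supported functions from the index set to `ℕ`. -/
abbrev MIdx : Type := RSIdx →₀ ℕ

/-- The unit multi-index `e_k`. -/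
def eK (k : ℕ) : MIdx := Finsupp.single (Sum.inl k) 1

/-- The unit multi-index `e_n` for `n ≠ (0,0)`. -/
def eN (n : {n : ℕ × ℕ // n ≠ (0, 0)}) : MIdx := Finsupp.single (Sum.inr n) 1

/-- The scaled length `[β] = Σ_k k·β(k) − Σ_{n≠(0,0)} β(n)`. -/
def slen (β : MIdx) : ℤ :=
  β.sum fun i m =>
    match i with
    | Sum.inl k => (k : ℤ) * (m : ℤ)
    | Sum.inr _ => -(m : ℤ)

/-- The parabolic length `|n| = n₁ + 2 n₂` of `n ∈ ℕ²`. -/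
def plen (n : ℕ × ℕ) : ℕ := n.1 + 2 * n.2

/-- The polynomial part `|β|_p = Σ_{n≠(0,0)} |n|·β(n)`. -/
def polyPart (β : MIdx) : ℕ :=
  β.sum fun i m =>
    match i with
    | Sum.inl _ => 0
    | Sum.inr n => plen n.val * m

/-- The homogeneity `|β| = α(1+[β]) + |β|_p`. -/
def homog (α : ℝ) (β : MIdx) : ℝ := α * (1 + (slen β : ℝ)) + (polyPart β : ℝ)

/-- `β` is purely polynomial iff `β = e_n` for some `n ≠ (0,0)`. -/
def PurelyPoly (β : MIdx) : Prop := ∃ n, β = eN n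

/-- `β` is populated iff it is purely polynomial or `[β] ≥ 0`. -/
def Populated (β : MIdx) : Prop := PurelyPoly β ∨ 0 ≤ slen β

/-- The ordinal `|β|_≺ = [β] + (1/2)|β|_p + (1/4)β(0)`. -/
def precNorm (β : MIdx) : ℝ :=
  (slen β : ℝ) + (polyPart β : ℝ) / 2 + (β (Sum.inl 0) : ℝ) / 4

/-- The quantity `Σ_{n≠(0,0)} n₁·β(n)`. -/
def firstComp (β : MIdx) : ℕ :=
  β.sum fun i m =>
    match i with
    | Sum.inl _ => 0
    | Sum.inr n => n.val.1 * m

/-! A populated `β` has `[β] ≥ -1`, so the `α`-part of its homogeneity is nonnegative and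
`|β|_p ≤ |β| < 2`. Since `|n| = n₁ + 2 n₂ ≡ n₁ mod 2`, the sum of the `n₁·β(n)` has the parity of
`|β|_p ∈ {0, 1}`, and `|β|_p = 0` exactly when `β` has no polynomial component. -/

lemma slen_eN (n : {n : ℕ × ℕ // n ≠ (0, 0)}) : slen (eN n) = -1 := by
  simp [slen, eN]

lemma Populated.neg_one_le_slen {β : MIdx} (hβ : Populated β) : -1 ≤ slen β := by
  rcases hβ with ⟨n, rfl⟩ | hslen
  · exact (slen_eN n).ge
  · lia

lemma polyPart_le_homog {α : ℝ} (hα : 0 ≤ α) {β : MIdx} (hβ : -1 ≤ slen β) :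
    (polyPart β : ℝ) ≤ homog α β := by
  have hslen : (-1 : ℝ) ≤ slen β := mod_cast hβ
  exact le_add_of_nonneg_left (mul_nonneg hα (by linarith))

lemma plen_eq_zero_iff {n : ℕ × ℕ} : plen n = 0 ↔ n = (0, 0) := by
  simp [plen, Prod.ext_iff]

lemma polyPart_eq_zero_iff {β : MIdx} : polyPart β = 0 ↔ ∀ n, β (Sum.inr n) = 0 := by
  have plen_ne_zero (n : {n : ℕ × ℕ // n ≠ (0, 0)}) : plen n.val ≠ 0 :=
    plen_eq_zero_iff.not.mpr n.property
  simp [polyPart, Finsupp.sum, plen_ne_zero]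

lemma plen_modEq_fst (n : ℕ × ℕ) : plen n ≡ n.1 [MOD 2] := by
  simp [plen, Nat.ModEq]

lemma polyPart_modEq_firstComp (β : MIdx) : polyPart β ≡ firstComp β [MOD 2] := by
  refine Nat.ModEq.sum fun i _ => ?_
  rcases i with k | n
  · rfl
  · exact (plen_modEq_fst n.val).mul_right _

theorem statement18_general (β : MIdx) (hβ : polyPart β < 2) :
    (∀ n, β (Sum.inr n) = 0) ↔ Even (firstComp β) :=
  calc (∀ n, β (Sum.inr n) = 0)
      ↔ polyPart β = 0 := polyPart_eq_zero_iff.symm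
    _ ↔ polyPart β % 2 = 0 := by rw [Nat.mod_eq_of_lt hβ]
    _ ↔ firstComp β % 2 = 0 := by rw [polyPart_modEq_firstComp β]
    _ ↔ Even (firstComp β) := Nat.even_iff.symm

/-- For `α > 0` and a populated `β` with `|β| < 2`: `β(n) = 0` for all `n ≠ (0,0)`
if and only if `Σ_{n≠(0,0)} n₁·β(n)` is even. -/
theorem statement18 (α : ℝ) (hα : 0 < α) (β : MIdx) (hβ : Populated β)
    (h2 : homog α β < 2) :
    (∀ n, β (Sum.inr n) = 0) ↔ Even (firstComp β) := by
  have hpoly : (polyPart β : ℝ) < 2 := (polyPart_le_homog hα.le hβ.neg_one_le_slen).trans_lt h2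
  exact statement18_general β (mod_cast hpoly)
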